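/- arXiv:1404.0464 — 4 statements merged into one kernel-verified Lean document; each statement's English description precedes it below -/
import Mathlib

section
/- For all m, n, k ∈ ℤ, the operators L_m satisfy the q-Jacobi identity of the q-deformed Virasoro–Witt algebra: [L_n,[L_m,L_k]_{(q^{m−k},q^{k−m})}]_{(q^{2n−m−k},q^{m+k−2n})} + [L_m,[L_k,L_n]_{(q^{k−n},q^{n−k})}]_{(q^{2m−k−n},q^{k+n−2m})} + [L_k,[L_n,L_m]_{(q^{n−m},q^{m−n})}]_{(q^{2k−n−m},q^{n+m−2k})} = 0 as ℂ-linear operators on V. -/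
/-- The q-number `[x] = (q^x - q^{-x})/(q - q⁻¹)`. -/
noncomputable def qnum (q : ℂ) (x : ℤ) : ℂ := (q ^ x - q ^ (-x)) / (q - q⁻¹)

/-- The operator `L_m = -q^N (a†)^{m+1} a` on `V = ℤ →₀ ℂ`,
determined by `L_m e_k = -[k] q^{k+m} e_{k+m}`. -/
noncomputable def Lop (q : ℂ) (m : ℤ) : Module.End ℂ (ℤ →₀ ℂ) :=
  Finsupp.lsum ℂ fun k : ℤ => (-(qnum q k) * q ^ (k + m)) • Finsupp.lsingle (k + m)

/-- The deformed commutator `[A,B]_{(u,v)} = u • (A∘B) - v • (B∘A)` of operators. -/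
noncomputable def dcomm (u v : ℂ) (A B : Module.End ℂ (ℤ →₀ ℂ)) : Module.End ℂ (ℤ →₀ ℂ) :=
  u • (A * B) - v • (B * A)

/-!
The identity holds for arbitrary elements of an associative algebra. Give `a`, `b`, `c` the weights
`n`, `m`, `k`. In each nested bracket the power of `q` attached to a word in `a`, `b`, `c` is twice
the weight of its first letter minus twice the weight of its last. It does not depend on the bracket
from which the word arises, so the twelve words cancel in pairs as in the ordinary Jacobi identity.
-/

section DeformedCommutator

variable {M A : Type*} [NonUnitalRing A]

/-- The deformed commutator `[a, b]_{(u,v)} = u • (a * b) - v • (b * a)` in an associative ring with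
an action of scalars; `dcomm` is the case of operators on `ℤ →₀ ℂ`. -/
def deformedCommutator [SMul M A] (u v : M) (a b : A) : A :=
  u • (a * b) - v • (b * a)

variable [Monoid M] [DistribMulAction M A] [IsScalarTower M A A] [SMulCommClass M A A]

theorem deformedCommutator_deformedCommutator (u v r s : M) (a b c : A) :
    deformedCommutator u v a (deformedCommutator r s b c) =
      (u * r) • (a * b * c) - (u * s) • (a * c * b)
        - (v * r) • (b * c * a) + (v * s) • (c * b * a) := by
  simp only [deformedCommutator, mul_sub, sub_mul, mul_smul_comm, smul_mul_assoc, smul_sub,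
    smul_smul, mul_assoc]
  abel

theorem deformedCommutator_deformedCommutator_zpow (q : Mˣ) (n m k : ℤ) (a b c : A) :
    deformedCommutator (↑(q ^ (2 * n - m - k)) : M) ↑(q ^ (m + k - 2 * n)) a
        (deformedCommutator (↑(q ^ (m - k)) : M) ↑(q ^ (k - m)) b c) =
      (↑(q ^ (2 * (n - k))) : M) • (a * b * c) - (↑(q ^ (2 * (n - m))) : M) • (a * c * b)
        - (↑(q ^ (2 * (m - n))) : M) • (b * c * a)
        + (↑(q ^ (2 * (k - n))) : M) • (c * b * a) := by
  have habc : 2 * n - m - k + (m - k) = 2 * (n - k) := by ring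
  have hacb : 2 * n - m - k + (k - m) = 2 * (n - m) := by ring
  have hbca : m + k - 2 * n + (m - k) = 2 * (m - n) := by ring
  have hcba : m + k - 2 * n + (k - m) = 2 * (k - n) := by ring
  simp only [deformedCommutator_deformedCommutator, ← Units.val_mul, ← zpow_add,
    habc, hacb, hbca, hcba]

theorem stmt2_general (q : Mˣ) (n m k : ℤ) (a b c : A) :
    deformedCommutator (↑(q ^ (2 * n - m - k)) : M) ↑(q ^ (m + k - 2 * n)) a
        (deformedCommutator (↑(q ^ (m - k)) : M) ↑(q ^ (k - m)) b c)
      + deformedCommutator (↑(q ^ (2 * m - k - n)) : M) ↑(q ^ (k + n - 2 * m)) b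
        (deformedCommutator (↑(q ^ (k - n)) : M) ↑(q ^ (n - k)) c a)
      + deformedCommutator (↑(q ^ (2 * k - n - m)) : M) ↑(q ^ (n + m - 2 * k)) c
        (deformedCommutator (↑(q ^ (n - m)) : M) ↑(q ^ (m - n)) a b) = 0 := by
  simp only [deformedCommutator_deformedCommutator_zpow]
  abel

end DeformedCommutator

/-- the q-Jacobi identity of the q-deformed Virasoro–Witt algebra. -/
theorem stmt2 (q : ℂ) (hq : q ≠ 0) (hq2 : q ^ 2 ≠ 1) (m n k : ℤ) :
    dcomm (q ^ (2 * n - m - k)) (q ^ (m + k - 2 * n)) (Lop q n)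
        (dcomm (q ^ (m - k)) (q ^ (k - m)) (Lop q m) (Lop q k))
      + dcomm (q ^ (2 * m - k - n)) (q ^ (k + n - 2 * m)) (Lop q m)
        (dcomm (q ^ (k - n)) (q ^ (n - k)) (Lop q k) (Lop q n))
      + dcomm (q ^ (2 * k - n - m)) (q ^ (n + m - 2 * k)) (Lop q k)
        (dcomm (q ^ (n - m)) (q ^ (m - n)) (Lop q n) (Lop q m)) = 0 := by
  simpa only [dcomm, deformedCommutator, Units.val_zpow_eq_zpow_val, Units.val_mk0] using
    stmt2_general (Units.mk0 q hq) n m k (Lop q n) (Lop q m) (Lop q k)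
end

section
/- For all m, n, k ∈ ℤ, the q-3-bracket ⟦L_m,L_n,L_k⟧ := q^{2m−n−k}·L_m∘[L_n,L_k]_{(q^{n−k},q^{k−n})} + q^{2n−k−m}·L_n∘[L_k,L_m]_{(q^{k−m},q^{m−k})} + q^{2k−m−n}·L_k∘[L_m,L_n]_{(q^{m−n},q^{n−m})} satisfies ⟦L_m,L_n,L_k⟧ = (q − q^{-1})·[m−n]·[m−k]·[n−k]·L_{m+n+k} as ℂ-linear operators on V. -/
/-!
The deformed commutator closes: `[L_n, L_k]_{(q^{n-k}, q^{k-n})} = [n-k] L_{n+k}`. Moreover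
`(q - q⁻¹) L_m L_p = L_{m+p} - q^{2p} L_{m+p} q^{2N}`, so with `s = m + n + k` the `q`-3-bracket is
a combination of `L_s` and `L_s q^{2N}` alone. The coefficient of `L_s q^{2N}` is a multiple of the
cyclic sum of `q^m [n-k]`, which telescopes to `0`; that of `L_s` is, up to a power
of `q`, a Vandermonde determinant in `q^{2m}, q^{2n}, q^{2k}`.
-/

theorem sub_inv_ne_zero_of_sq_ne_one {K : Type*} [DivisionRing K] {x : K} (hx : x ≠ 0)
    (hx2 : x ^ 2 ≠ 1) : x - x⁻¹ ≠ 0 := by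
  rwa [sub_ne_zero, Ne, ← mul_eq_one_iff_eq_inv₀ hx, ← sq]

theorem sq_div_mul_cyclic_sum_eq_prod {K : Type*} [Field K] {x y z : K} (hx : x ≠ 0) (hy : y ≠ 0)
    (hz : z ≠ 0) :
    x ^ 2 / (y * z) * (y / z - z / y) + y ^ 2 / (z * x) * (z / x - x / z)
        + z ^ 2 / (x * y) * (x / y - y / x)
      = (x / y - y / x) * (x / z - z / x) * (y / z - z / y) := by
  field_simp
  ring

section qnum

variable {q : ℂ}

theorem sub_inv_mul_qnum (hl : q - q⁻¹ ≠ 0) (x : ℤ) :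
    (q - q⁻¹) * qnum q x = q ^ x - q ^ (-x) :=
  mul_div_cancel₀ _ hl

theorem qnum_sub (hq : q ≠ 0) (m n : ℤ) :
    qnum q (m - n) = (q ^ m / q ^ n - q ^ n / q ^ m) / (q - q⁻¹) := by
  rw [qnum, neg_sub, zpow_sub₀ hq, zpow_sub₀ hq]

theorem zpow_mul_qnum_add_sub (hq : q ≠ 0) (j n k : ℤ) :
    q ^ n * qnum q (j + k) - q ^ k * qnum q (j + n) = -(q ^ (-j) * qnum q (n - k)) := by
  simp only [qnum, mul_div_assoc', ← sub_div, ← neg_div, mul_sub, ← zpow_add₀ hq]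
  ring_nf

theorem zpow_mul_qnum_cyclic_sum (hq : q ≠ 0) (m n k : ℤ) :
    q ^ m * qnum q (n - k) + q ^ n * qnum q (k - m) + q ^ k * qnum q (m - n) = 0 := by
  have zpow_mul_qnum_eq_sub {a b c s : ℤ} (hs : a + b + c = s) :
      q ^ a * qnum q (b - c) = (q ^ (s - 2 * c) - q ^ (s - 2 * b)) / (q - q⁻¹) := by
    rw [qnum, mul_div_assoc', mul_sub, ← zpow_add₀ hq, ← zpow_add₀ hq, ← hs]
    ring_nf
  rw [zpow_mul_qnum_eq_sub (show m + n + k = m + n + k from rfl),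
    zpow_mul_qnum_eq_sub (show n + k + m = m + n + k by ring),
    zpow_mul_qnum_eq_sub (show k + m + n = m + n + k by ring)]
  ring

theorem zpow_mul_qnum_cyclic_sum_eq_prod (hq : q ≠ 0) (hl : q - q⁻¹ ≠ 0) (m n k : ℤ) :
    q ^ (2 * m - n - k) * qnum q (n - k) + q ^ (2 * n - k - m) * qnum q (k - m)
        + q ^ (2 * k - m - n) * qnum q (m - n)
      = (q - q⁻¹) ^ 2 * (qnum q (m - n) * qnum q (m - k) * qnum q (n - k)) := by
  have zpow_two_mul_sub_sub (a b c : ℤ) :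
      q ^ (2 * a - b - c) = (q ^ a) ^ 2 / (q ^ b * q ^ c) := by
    rw [sub_sub, zpow_sub₀ hq, zpow_add₀ hq, mul_comm, zpow_mul, zpow_ofNat]
  have sq_mul_div_mul_div_mul_div (a b c : ℂ) {l : ℂ} (hl : l ≠ 0) :
      l ^ 2 * (a / l * (b / l) * (c / l)) = a * b * c / l := by
    field_simp
  simp only [qnum_sub hq, zpow_two_mul_sub_sub]
  rw [sq_mul_div_mul_div_mul_div _ _ _ hl, mul_div_assoc', mul_div_assoc', mul_div_assoc',
    ← add_div, ← add_div,
    sq_div_mul_cyclic_sum_eq_prod (zpow_ne_zero m hq) (zpow_ne_zero n hq) (zpow_ne_zero k hq)]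

end qnum

/-- The operator `q^N` on `ℤ →₀ ℂ`, determined by `q^N e_k = q^k e_k`. The products `L_m L_p` are
expanded in terms of it. -/
noncomputable def qpowN (q : ℂ) : Module.End ℂ (ℤ →₀ ℂ) :=
  Finsupp.lsum ℂ fun k : ℤ => q ^ k • Finsupp.lsingle k

theorem qpowN_single (q : ℂ) (j : ℤ) (c : ℂ) :
    qpowN q (Finsupp.single j c) = Finsupp.single j (q ^ j * c) := by
  simp [qpowN]

theorem Lop_single (q : ℂ) (m j : ℤ) (c : ℂ) :
    Lop q m (Finsupp.single j c) = Finsupp.single (j + m) (-(qnum q j) * q ^ (j + m) * c) := by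
  simp [Lop]

section operators

variable {q : ℂ}

theorem Lop_mul_Lop_single (hq : q ≠ 0) (m p j : ℤ) (c : ℂ) :
    (Lop q m * Lop q p) (Finsupp.single j c)
      = Finsupp.single (j + (m + p))
          (qnum q j * qnum q (j + p) * q ^ (2 * j + 2 * p + m) * c) := by
  have hexp : q ^ (2 * j + 2 * p + m) = q ^ (j + p) * q ^ (j + p + m) := by
    rw [← zpow_add₀ hq]; ring_nf
  rw [Module.End.mul_apply, Lop_single, Lop_single, hexp, add_assoc j p m, add_comm p m]
  congr 1
  ring

theorem dcomm_Lop (hq : q ≠ 0) (n k : ℤ) :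
    dcomm (q ^ (n - k)) (q ^ (k - n)) (Lop q n) (Lop q k) = qnum q (n - k) • Lop q (n + k) := by
  refine Finsupp.lhom_ext fun j c => ?_
  have hnk : q ^ (n - k) * q ^ (2 * j + 2 * k + n) = q ^ (2 * j + n + k) * q ^ n := by
    simp only [← zpow_add₀ hq]; ring_nf
  have hkn : q ^ (k - n) * q ^ (2 * j + 2 * n + k) = q ^ (2 * j + n + k) * q ^ k := by
    simp only [← zpow_add₀ hq]; ring_nf
  have hj : q ^ (j + (n + k)) = q ^ (2 * j + n + k) * q ^ (-j) := by
    rw [← zpow_add₀ hq]; ring_nf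
  simp only [dcomm, LinearMap.sub_apply, LinearMap.smul_apply, Lop_mul_Lop_single hq, Lop_single,
    Finsupp.smul_single, smul_eq_mul, add_comm k n, ← Finsupp.single_sub]
  congr 1
  linear_combination qnum q j * c * (qnum q (j + k) * hnk - qnum q (j + n) * hkn
    + q ^ (2 * j + n + k) * zpow_mul_qnum_add_sub hq j n k + qnum q (n - k) * hj)

theorem sub_inv_smul_Lop_mul_Lop (hq : q ≠ 0) (hl : q - q⁻¹ ≠ 0) (m p : ℤ) :
    (q - q⁻¹) • (Lop q m * Lop q p)
      = Lop q (m + p) - q ^ (2 * p) • (Lop q (m + p) * qpowN q ^ 2) := by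
  refine Finsupp.lhom_ext fun j c => ?_
  have hpos : q ^ (j + p) * q ^ (2 * j + 2 * p + m)
      = q ^ (2 * p) * q ^ (j + (m + p)) * q ^ j * q ^ j := by
    simp only [← zpow_add₀ hq]; ring_nf
  have hneg : q ^ (-(j + p)) * q ^ (2 * j + 2 * p + m) = q ^ (j + (m + p)) := by
    rw [← zpow_add₀ hq]; ring_nf
  simp only [sq, LinearMap.sub_apply, LinearMap.smul_apply, Lop_mul_Lop_single hq]
  simp only [Module.End.mul_apply, qpowN_single, Lop_single, Finsupp.smul_single, smul_eq_mul,
    ← Finsupp.single_sub]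
  congr 1
  linear_combination qnum q j * c * (q ^ (2 * j + 2 * p + m) * sub_inv_mul_qnum hl (j + p)
    + hpos - hneg)

theorem sub_inv_smul_Lop_mul_dcomm (hq : q ≠ 0) (hl : q - q⁻¹ ≠ 0) {m n k s : ℤ}
    (hs : m + (n + k) = s) :
    (q - q⁻¹) • q ^ (2 * m - n - k) •
        (Lop q m * dcomm (q ^ (n - k)) (q ^ (k - n)) (Lop q n) (Lop q k))
      = (q ^ (2 * m - n - k) * qnum q (n - k)) • Lop q s
        - (q ^ s * (q ^ m * qnum q (n - k))) • (Lop q s * qpowN q ^ 2) := by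
  have hexp : q ^ (2 * m - n - k) * q ^ (2 * (n + k)) = q ^ s * q ^ m := by
    simp only [← zpow_add₀ hq, ← hs]; ring_nf
  rw [dcomm_Lop hq, mul_smul_comm, smul_comm (q - q⁻¹), smul_comm (q - q⁻¹),
    sub_inv_smul_Lop_mul_Lop hq hl, hs]
  match_scalars
  · ring
  · linear_combination -qnum q (n - k) * hexp

end operators

/-- the q-3-bracket
`⟦L_m,L_n,L_k⟧ = q^{2m-n-k} L_m ∘ [L_n,L_k]_{(q^{n-k},q^{k-n})} + cyclic`
equals `(q - q⁻¹)·[m-n]·[m-k]·[n-k]·L_{m+n+k}`. -/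
theorem stmt3 (q : ℂ) (hq : q ≠ 0) (hq2 : q ^ 2 ≠ 1) (m n k : ℤ) :
    q ^ (2 * m - n - k) • (Lop q m * dcomm (q ^ (n - k)) (q ^ (k - n)) (Lop q n) (Lop q k))
      + q ^ (2 * n - k - m) • (Lop q n * dcomm (q ^ (k - m)) (q ^ (m - k)) (Lop q k) (Lop q m))
      + q ^ (2 * k - m - n) • (Lop q k * dcomm (q ^ (m - n)) (q ^ (n - m)) (Lop q m) (Lop q n))
      = ((q - q⁻¹) * qnum q (m - n) * qnum q (m - k) * qnum q (n - k)) • Lop q (m + n + k) := by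
  have hl : q - q⁻¹ ≠ 0 := sub_inv_ne_zero_of_sq_ne_one hq hq2
  have hL := zpow_mul_qnum_cyclic_sum_eq_prod hq hl m n k
  have hLN := zpow_mul_qnum_cyclic_sum hq m n k
  rw [← smul_right_inj hl, smul_add, smul_add,
    sub_inv_smul_Lop_mul_dcomm hq hl (show m + (n + k) = m + n + k by ring),
    sub_inv_smul_Lop_mul_dcomm hq hl (show n + (k + m) = m + n + k by ring),
    sub_inv_smul_Lop_mul_dcomm hq hl (show k + (m + n) = m + n + k by ring)]
  match_scalars
  · linear_combination hL
  · linear_combination -q ^ (m + n + k) * hLN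
end

section
/- Let q be a real number with q > 1, and define the trilinear bracket on the free ℂ-module with basis (L_i)_{i∈ℤ} by ⟦L_a,L_b,L_c⟧ = (q − q^{-1})·[a−b]·[a−c]·[b−c]·L_{a+b+c}. Then this bracket does not satisfy the fundamental identity of a Filippov 3-algebra: ⟦L_{−2},L_3,⟦L_0,L_1,L_2⟧⟧ ≠ ⟦⟦L_{−2},L_3,L_0⟧,L_1,L_2⟧ + ⟦L_0,⟦L_{−2},L_3,L_1⟧,L_2⟧ + ⟦L_0,L_1,⟦L_{−2},L_3,L_2⟧⟧; indeed the left-hand side is 0 while the right-hand side is a nonzero multiple of L_4. -/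
/-- The q-number `[x] = (q^x - q^{-x})/(q - q⁻¹)` for real `q`. -/
noncomputable def qnumR (q : ℝ) (x : ℤ) : ℝ := (q ^ x - q ^ (-x)) / (q - q⁻¹)

/-- The structure constant `g(a,b,c) = (q - q⁻¹)·[a-b]·[a-c]·[b-c]`. -/
noncomputable def gVW (q : ℝ) (a b c : ℤ) : ℝ :=
  (q - q⁻¹) * qnumR q (a - b) * qnumR q (a - c) * qnumR q (b - c)

/-- The trilinear bracket `⟦L_a,L_b,L_c⟧ = g(a,b,c)·L_{a+b+c}` on the free ℂ-module
`ℤ →₀ ℂ` with basis `L_i = single i 1`, extended trilinearly. -/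
noncomputable def VWbr (q : ℝ) (f g h : ℤ →₀ ℂ) : ℤ →₀ ℂ :=
  f.sum fun a ca => g.sum fun b cb => h.sum fun c cc =>
    (ca * cb * cc * (gVW q a b c : ℂ)) • Finsupp.single (a + b + c) (1 : ℂ)

/-- The basis vector `L_i`. -/
noncomputable def LL (i : ℤ) : ℤ →₀ ℂ := Finsupp.single i 1

/-!
Since `q - q⁻¹ ≠ 0` forces `|q| ≠ 0, 1`, the q-number `[x]` vanishes only at `x = 0`, so the
structure constant `g(a,b,c)` vanishes exactly when two of its indices coincide. The indices
`(-2, 3; 0, 1, 2)` are chosen so that this kills every term but one: on the left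
`g(-2,3,0+1+2) = 0`, on the right `g(1,1,2) = 0` and `g(0,2,2) = 0`, while
`g(-2,3,2) g(0,1,3)` has distinct indices in each factor and survives.
-/

theorem qnumR_zero (q : ℝ) : qnumR q 0 = 0 := by simp [qnumR]

theorem abs_ne_one_of_sub_inv_ne_zero {q : ℝ} (hq : q - q⁻¹ ≠ 0) : |q| ≠ 1 := by
  intro h
  rcases eq_or_eq_neg_of_abs_eq h with rfl | rfl <;> simp at hq

theorem qnumR_eq_zero_iff {q : ℝ} (hq : q - q⁻¹ ≠ 0) {x : ℤ} : qnumR q x = 0 ↔ x = 0 := by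
  refine ⟨fun h => ?_, fun h => h ▸ qnumR_zero q⟩
  have hq_ne_zero : q ≠ 0 := by
    rintro rfl
    simp at hq
  have hpow : q ^ x = q ^ (-x) :=
    sub_eq_zero.mp ((div_eq_zero_iff.mp h).resolve_right hq)
  -- Powers of a negative base need not be injective in the exponent, those of `|q|` are.
  have habs : |q| ^ x = |q| ^ (-x) := by rw [← abs_zpow, ← abs_zpow, hpow]
  exact self_eq_neg.mp (zpow_right_injective₀ (abs_pos.mpr hq_ne_zero)
    (abs_ne_one_of_sub_inv_ne_zero hq) habs)

theorem gVW_eq_zero_iff {q : ℝ} (hq : q - q⁻¹ ≠ 0) {a b c : ℤ} :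
    gVW q a b c = 0 ↔ a = b ∨ a = c ∨ b = c := by
  simp only [gVW, mul_eq_zero, hq, qnumR_eq_zero_iff hq, sub_eq_zero, false_or, or_assoc]

theorem VWbr_single (q : ℝ) (a b c : ℤ) (x y z : ℂ) :
    VWbr q (Finsupp.single a x) (Finsupp.single b y) (Finsupp.single c z)
      = Finsupp.single (a + b + c) (x * y * z * (gVW q a b c : ℂ)) := by
  simp [VWbr]

theorem VWbr_LL_LL_VWbr_LL (q : ℝ) (a b c d e : ℤ) :
    VWbr q (LL a) (LL b) (VWbr q (LL c) (LL d) (LL e))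
      = ((gVW q c d e * gVW q a b (c + d + e) : ℝ) : ℂ) • LL (a + b + c + d + e) := by
  simp [LL, VWbr_single, add_assoc]

theorem derivation_sum_VWbr_LL (q : ℝ) (a b c d e : ℤ) :
    VWbr q (VWbr q (LL a) (LL b) (LL c)) (LL d) (LL e)
        + VWbr q (LL c) (VWbr q (LL a) (LL b) (LL d)) (LL e)
        + VWbr q (LL c) (LL d) (VWbr q (LL a) (LL b) (LL e))
      = ((gVW q a b c * gVW q (a + b + c) d e + gVW q a b d * gVW q c (a + b + d) e
          + gVW q a b e * gVW q c d (a + b + e) : ℝ) : ℂ) • LL (a + b + c + d + e) := by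
  have hmid : c + (a + b + d) + e = a + b + c + d + e := by ring
  have hright : c + d + (a + b + e) = a + b + c + d + e := by ring
  simp only [LL, VWbr_single, hmid, hright, one_mul, mul_one, Finsupp.smul_single, smul_eq_mul,
    Complex.ofReal_add, Complex.ofReal_mul, Finsupp.single_add]

theorem stmt5_general (q : ℝ) (hq : q - q⁻¹ ≠ 0) :
    VWbr q (LL (-2)) (LL 3) (VWbr q (LL 0) (LL 1) (LL 2))
      ≠ VWbr q (VWbr q (LL (-2)) (LL 3) (LL 0)) (LL 1) (LL 2)
        + VWbr q (LL 0) (VWbr q (LL (-2)) (LL 3) (LL 1)) (LL 2)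
        + VWbr q (LL 0) (LL 1) (VWbr q (LL (-2)) (LL 3) (LL 2)) ∧
    VWbr q (LL (-2)) (LL 3) (VWbr q (LL 0) (LL 1) (LL 2)) = 0 ∧
    ∃ c : ℂ, c ≠ 0 ∧
      VWbr q (VWbr q (LL (-2)) (LL 3) (LL 0)) (LL 1) (LL 2)
        + VWbr q (LL 0) (VWbr q (LL (-2)) (LL 3) (LL 1)) (LL 2)
        + VWbr q (LL 0) (LL 1) (VWbr q (LL (-2)) (LL 3) (LL 2)) = c • LL 4 := by
  have hleft : VWbr q (LL (-2)) (LL 3) (VWbr q (LL 0) (LL 1) (LL 2)) = 0 := by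
    have hvanish : gVW q (-2) 3 (0 + 1 + 2) = 0 := (gVW_eq_zero_iff hq).mpr (by norm_num)
    rw [VWbr_LL_LL_VWbr_LL, hvanish, mul_zero, Complex.ofReal_zero, zero_smul]
  have hright := derivation_sum_VWbr_LL q (-2) 3 0 1 2
  have hfirst : gVW q (-2 + 3 + 0) 1 2 = 0 := (gVW_eq_zero_iff hq).mpr (by norm_num)
  have hsecond : gVW q 0 (-2 + 3 + 1) 2 = 0 := (gVW_eq_zero_iff hq).mpr (by norm_num)
  have hthird : gVW q (-2) 3 2 * gVW q 0 1 (-2 + 3 + 2) ≠ 0 := by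
    simp [gVW_eq_zero_iff hq]
  have hindex : (-2 + 3 + 0 + 1 + 2 : ℤ) = 4 := by norm_num
  rw [hfirst, hsecond, mul_zero, mul_zero, add_zero, zero_add, hindex] at hright
  have hcoeff := Complex.ofReal_ne_zero.mpr hthird
  refine ⟨?_, hleft, _, hcoeff, hright⟩
  rw [hleft, hright]
  exact (smul_ne_zero hcoeff (Finsupp.single_ne_zero.mpr one_ne_zero)).symm

/-- for real `q > 1`, the q-deformed Virasoro–Witt 3-bracket fails the
fundamental identity of a Filippov 3-algebra: the left-hand side vanishes while the
right-hand side is a nonzero multiple of `L₄`. -/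
theorem stmt5 (q : ℝ) (hq : 1 < q) :
    VWbr q (LL (-2)) (LL 3) (VWbr q (LL 0) (LL 1) (LL 2))
      ≠ VWbr q (VWbr q (LL (-2)) (LL 3) (LL 0)) (LL 1) (LL 2)
        + VWbr q (LL 0) (VWbr q (LL (-2)) (LL 3) (LL 1)) (LL 2)
        + VWbr q (LL 0) (LL 1) (VWbr q (LL (-2)) (LL 3) (LL 2)) ∧
    VWbr q (LL (-2)) (LL 3) (VWbr q (LL 0) (LL 1) (LL 2)) = 0 ∧
    ∃ c : ℂ, c ≠ 0 ∧
      VWbr q (VWbr q (LL (-2)) (LL 3) (LL 0)) (LL 1) (LL 2)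
        + VWbr q (LL 0) (VWbr q (LL (-2)) (LL 3) (LL 1)) (LL 2)
        + VWbr q (LL 0) (LL 1) (VWbr q (LL (-2)) (LL 3) (LL 2)) = c • LL 4 :=
  stmt5_general q (sub_pos.mpr ((inv_lt_one_of_one_lt₀ hq).trans hq)).ne'
end

section
/- Let p be a real number with p > 1 and let n ≥ 3 be odd. With the indices k_l = (l,1) ∈ ℤ² for l = 1,…,2n−1, the fully antisymmetrized sh-Jacobi sum of the n-algebra of the operators T does not vanish: Σ_{σ∈S_{2n−1}} sgn(σ)·[[T_{k_{σ(1)}},…,T_{k_{σ(n)}}], T_{k_{σ(n+1)}},…,T_{k_{σ(2n−1)}}] ≠ 0; hence for odd n this n-algebra is not a sh-n-Lie algebra. -/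
/-- The wedge `m∧n = m₁n₂ - m₂n₁` on ℤ². -/
def wedge (m n : ℤ × ℤ) : ℤ := m.1 * n.2 - m.2 * n.1

/-- The operator `T_n` on `V = (ℤ×ℤ) →₀ ℂ` determined by `T_n e_k = p^{k∧n}·e_{k+n}`. -/
noncomputable def Twop (p : ℝ) (n : ℤ × ℤ) : Module.End ℂ ((ℤ × ℤ) →₀ ℂ) :=
  Finsupp.lsum ℂ fun k : ℤ × ℤ => ((p : ℂ) ^ wedge k n) • Finsupp.lsingle (k + n)

/-- The recursively defined n-bracket in an associative ring (with fuel parameter):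
`[A₁] = A₁` and `[A₁,…,A_n] = Σ_{s=1}^{n} (-1)^{s+1} A_s·[A₁,…,Â_s,…,A_n]`. -/
noncomputable def nbrAux {R : Type*} [Ring R] : ℕ → List R → R
  | 0, _ => 0
  | _ + 1, [] => 0
  | _ + 1, [a] => a
  | fuel + 1, l => ∑ s ∈ Finset.range l.length,
      (-1 : R) ^ s * (l.getD s 0 * nbrAux fuel (l.eraseIdx s))

/-- The n-bracket `[A₁,…,A_n]`. -/
noncomputable def nbr {R : Type*} [Ring R] (l : List R) : R := nbrAux l.length l

/-!
After antisymmetrization over `S_{2n-1}`, exchanging two adjacent factors of a product of the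
operators `T_{k_σ(1)}, …, T_{k_σ(2n-1)}` only changes the sign. Hence a bracket of `m` of them
counts as `m!` times their product, and since `n` is odd the inner bracket passes any operator with
a minus sign, as a single operator does. So the sh-Jacobi sum is `n! · n!` times the
antisymmetrized product `∑ σ, sgn σ T_{k_σ(1)} ⋯ T_{k_σ(2n-1)}`. For `k_l = (x_l, 1)` this product
sends `e_0` to a multiple of a single basis vector, whose coefficient is a power of `p` times the
Vandermonde determinant of the nodes `p ^ (2 x_l)`, which are distinct.
-/

section Bracket

variable {R S M : Type*} [Ring R] [Ring S] [AddCommGroup M]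

@[simp]
theorem nbr_nil : nbr ([] : List R) = 0 := by
  simp [nbr, nbrAux]

@[simp]
theorem nbr_singleton (a : R) : nbr [a] = a := by
  simp [nbr, nbrAux]

theorem nbr_eq_sum {l : List R} (hl : 2 ≤ l.length) :
    nbr l = ∑ s : Fin l.length, (-1) ^ (s : ℕ) * (l[s] * nbr (l.eraseIdx s)) := by
  match l, hl with
  | a :: b :: t, _ =>
    have hrange : nbr (a :: b :: t) = ∑ s ∈ Finset.range (a :: b :: t).length,
        (-1) ^ s * ((a :: b :: t).getD s 0 * nbrAux (b :: t).length ((a :: b :: t).eraseIdx s)) :=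
      rfl
    rw [hrange, Finset.sum_range]
    refine Finset.sum_congr rfl fun s _ => ?_
    rw [nbr, List.length_eraseIdx_of_lt s.isLt, List.getD_eq_getElem _ _ s.isLt]
    rfl

theorem map_nbr (f : R →+* S) (l : List R) : f (nbr l) = nbr (l.map f) := by
  induction hn : l.length generalizing l with
  | zero => simp [List.length_eq_zero_iff.mp hn]
  | succ n ih =>
    rcases Nat.eq_zero_or_pos n with rfl | hpos
    · obtain ⟨a, rfl⟩ := List.length_eq_one_iff.mp hn
      simp
    · rw [nbr_eq_sum (by omega), nbr_eq_sum (by simp; omega), map_sum]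
      refine Fintype.sum_equiv (finCongr (List.length_map f).symm) _ _ fun s => ?_
      have herase := ih (l.eraseIdx s) (by rw [List.length_eraseIdx_of_lt s.isLt, hn]; rfl)
      simp [herase, List.eraseIdx_map]

theorem perm_append_of_perm_cons {α : Type*} {p q b c : List α} {a : α}
    (h : (p ++ a :: q).Perm (a :: c)) : (p ++ b ++ q).Perm (b ++ c) := by
  have hpq : (p ++ q).Perm c := (List.perm_middle.symm.trans h).cons_inv
  rw [List.append_assoc]
  exact (List.perm_append_comm_assoc p b q).trans (hpq.append_left b)

/-- The additive map `φ` is alternating on the products of the rearrangements of `l`: exchanging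
two adjacent factors changes its sign. Only rearrangements of `l` are tested, since the
antisymmetrization over permutations of indices is not alternating on words with repeated
letters. -/
def AlternatesOn (φ : R →+ M) (l : List R) : Prop :=
  ∀ ⦃u v : List R⦄ ⦃x y : R⦄, (u ++ x :: y :: v).Perm l →
    φ (u ++ x :: y :: v).prod = -φ (u ++ y :: x :: v).prod

namespace AlternatesOn

variable {φ : R →+ M} {l l' p q : List R} {a : R}

theorem of_perm (h : AlternatesOn φ l) (hl : l'.Perm l) : AlternatesOn φ l' :=
  fun _ _ _ _ hw => h (hw.trans hl)

theorem comp_mulLeft_mulRight (h : AlternatesOn φ (p ++ l ++ q)) :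
    AlternatesOn (φ.comp ((AddMonoidHom.mulLeft p.prod).comp (AddMonoidHom.mulRight q.prod)))
      l := by
  intro u v x y hw
  simpa [mul_assoc] using
    @h (p ++ u) (v ++ q) x y (by simpa using (hw.append_left p).append_right q)

theorem comp_mulLeft (h : AlternatesOn φ (a :: l)) :
    AlternatesOn (φ.comp (AddMonoidHom.mulLeft a)) l := by
  intro u v x y hw
  simpa using @h (a :: u) v x y (hw.cons a)

theorem map_prod_middle (h : AlternatesOn φ (p ++ (l ++ a :: q))) :
    φ (p ++ (l ++ a :: q)).prod = (-1 : ℤ) ^ l.length • φ (p ++ a :: (l ++ q)).prod := by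
  induction l generalizing p with
  | nil => simp
  | cons b l ih =>
    have hmove : φ (p ++ b :: (l ++ a :: q)).prod
        = (-1 : ℤ) ^ l.length • φ (p ++ b :: a :: (l ++ q)).prod := by
      simpa using @ih (p ++ [b]) (by simpa using h)
    have hswap : φ (p ++ b :: a :: (l ++ q)).prod = -φ (p ++ a :: b :: (l ++ q)).prod :=
      h ((List.perm_middle.symm.cons b).append_left p)
    rw [List.cons_append, hmove, hswap]
    simp [pow_succ]

theorem map_getElem_mul_prod_eraseIdx (h : AlternatesOn φ l) {s : ℕ} (hs : s < l.length) :
    φ (l[s] * (l.eraseIdx s).prod) = (-1 : ℤ) ^ s • φ l.prod := by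
  have hsplit : l = l.take s ++ l[s] :: l.drop (s + 1) := by simp
  have hmove := map_prod_middle (p := []) (hsplit ▸ h)
  rw [List.nil_append, List.nil_append, ← hsplit, ← List.eraseIdx_eq_take_drop_succ,
    List.length_take_of_le hs.le] at hmove
  rw [hmove, smul_smul, ← mul_pow, ← List.prod_cons]
  simp

theorem map_nbr (h : AlternatesOn φ l) (hl : l ≠ []) :
    φ (nbr l) = l.length.factorial • φ l.prod := by
  induction hn : l.length generalizing l φ with
  | zero => exact absurd (List.length_eq_zero_iff.mp hn) hl
  | succ n ih =>
    rcases Nat.eq_zero_or_pos n with rfl | hpos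
    · obtain ⟨a, rfl⟩ := List.length_eq_one_iff.mp hn
      simp
    · have hterm (s : Fin l.length) :
          φ ((-1) ^ (s : ℕ) * (l[s] * nbr (l.eraseIdx s))) = n.factorial • φ l.prod := by
        have hlen : (l.eraseIdx s).length = n := by
          rw [List.length_eraseIdx_of_lt s.isLt, hn, Nat.add_sub_cancel]
        have hbracket : φ (l[s] * nbr (l.eraseIdx s))
            = n.factorial • φ (l[s] * (l.eraseIdx s).prod) :=
          ih (comp_mulLeft (h.of_perm (List.getElem_cons_eraseIdx_perm s.isLt)))
            (List.ne_nil_of_length_pos (hlen ▸ hpos)) hlen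
        have hsign : φ ((-1) ^ (s : ℕ) * (l[s] * nbr (l.eraseIdx s)))
            = (-1 : ℤ) ^ (s : ℕ) • φ (l[s] * nbr (l.eraseIdx s)) := by
          rw [← map_zsmul, zsmul_eq_mul]
          simp
        have hmove : φ (l[s] * (l.eraseIdx s).prod) = (-1 : ℤ) ^ (s : ℕ) • φ l.prod :=
          h.map_getElem_mul_prod_eraseIdx s.isLt
        rw [hsign, hbracket, hmove, smul_comm, smul_smul, ← mul_pow]
        simp
      rw [nbr_eq_sum (by omega), map_sum, Finset.sum_congr rfl fun s _ => hterm s]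
      simp [hn, Nat.factorial_succ, mul_smul]

variable {b c : List R}

theorem map_prod_nbr_middle (h : AlternatesOn φ (p ++ b ++ q)) (hb : b ≠ []) :
    φ (p ++ nbr b :: q).prod = b.length.factorial • φ (p ++ b ++ q).prod := by
  simpa [mul_assoc] using h.comp_mulLeft_mulRight.map_nbr hb

theorem map_prod_nbr_swap (h : AlternatesOn φ (p ++ b ++ a :: q)) (hb : Odd b.length) :
    φ (p ++ nbr b :: a :: q).prod = -φ (p ++ a :: nbr b :: q).prod := by
  have hb₀ : b ≠ [] := List.ne_nil_of_length_pos hb.pos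
  have hmove : φ (p ++ b ++ a :: q).prod = -φ (p ++ [a] ++ b ++ q).prod := by
    rw [List.append_assoc] at h
    rw [List.append_assoc, h.map_prod_middle, hb.neg_one_pow, neg_one_zsmul]
    simp
  have hright : φ (p ++ [a] ++ nbr b :: q).prod
      = b.length.factorial • φ (p ++ [a] ++ b ++ q).prod := by
    refine map_prod_nbr_middle (h.of_perm ?_) hb₀
    simpa using List.perm_middle.symm.append_left p
  rw [h.map_prod_nbr_middle hb₀, hmove, smul_neg, ← hright, List.append_assoc,
    List.singleton_append]

-- A block of odd length anticommutes with a single letter, so it may itself play that role.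
theorem nbr_cons (h : AlternatesOn φ (b ++ c)) (hb : Odd b.length) :
    AlternatesOn φ (nbr b :: c) := by
  have hblock {p q : List R} (hw : (p ++ nbr b :: q).Perm (nbr b :: c)) :
      AlternatesOn φ (p ++ b ++ q) :=
    h.of_perm (perm_append_of_perm_cons hw)
  have hexpand {p q : List R} (hw : (p ++ nbr b :: q).Perm (nbr b :: c)) :
      φ (p ++ nbr b :: q).prod = b.length.factorial • φ (p ++ b ++ q).prod :=
    (hblock hw).map_prod_nbr_middle (List.ne_nil_of_length_pos hb.pos)
  intro u v x y hw
  have hw' : (u ++ y :: x :: v).Perm (nbr b :: c) :=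
    ((List.Perm.swap x y v).append_left u).trans hw
  have hmem : nbr b ∈ u ++ x :: y :: v := hw.mem_iff.mpr List.mem_cons_self
  simp only [List.mem_append, List.mem_cons] at hmem
  rcases hmem with hu | rfl | rfl | hv
  · obtain ⟨s, t, rfl⟩ := List.append_of_mem hu
    rw [List.append_assoc, List.cons_append] at hw hw' ⊢
    rw [List.append_assoc, List.cons_append, hexpand hw, hexpand hw', ← smul_neg]
    congr 1
    simpa using @hblock s _ hw (s ++ b ++ t) v x y (by simp)
  · exact (hblock hw).map_prod_nbr_swap hb
  · rw [(hblock hw').map_prod_nbr_swap hb, neg_neg]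
  · obtain ⟨s, t, rfl⟩ := List.append_of_mem hv
    rw [← List.cons_append, ← List.cons_append, ← List.append_assoc] at hw hw' ⊢
    rw [← List.cons_append, ← List.cons_append, ← List.append_assoc, hexpand hw, hexpand hw',
      ← smul_neg]
    congr 1
    simpa using @hblock _ t hw u (s ++ b ++ t) x y (by simp)

theorem map_nbr_nbr_cons (h : AlternatesOn φ (b ++ c)) (hb : Odd b.length) :
    φ (nbr (nbr b :: c))
      = (c.length + 1).factorial • b.length.factorial • φ (b ++ c).prod := by
  rw [(h.nbr_cons hb).map_nbr (List.cons_ne_nil _ _), List.length_cons]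
  congr 1
  exact map_prod_nbr_middle (p := []) h (List.ne_nil_of_length_pos hb.pos)

end AlternatesOn

end Bracket

section SignedSum

theorem map_swap_append_cons_cons {α : Type*} [DecidableEq α] {u v : List α} {i j : α}
    (h : (u ++ i :: j :: v).Nodup) :
    (u ++ i :: j :: v).map (Equiv.swap i j) = u ++ j :: i :: v := by
  have hfix {t : List α} (hi : i ∉ t) (hj : j ∉ t) : t.map (Equiv.swap i j) = t :=
    (List.map_congr_left fun k hk => Equiv.swap_apply_of_ne_of_ne (ne_of_mem_of_not_mem hk hi)
      (ne_of_mem_of_not_mem hk hj)).trans t.map_id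
  have hi : (i :: (u ++ j :: v)).Nodup := List.nodup_middle.mp h
  have hj : (j :: (u ++ [i] ++ v)).Nodup := List.nodup_middle.mp (by simpa using h)
  simp only [List.nodup_cons, List.mem_append, List.mem_cons, not_or] at hi hj
  simp [hfix, hi, hj]

variable {R M α : Type*} [Ring R] [AddCommGroup M] [Fintype α] [DecidableEq α]

/-- The antisymmetrization `f ↦ ∑ σ, sgn(σ) f(σ)` over the symmetric group of `α`, as an additive
map on functions of `σ`, so that it can be applied to products in the ring `Perm α → R`. -/
def signedSum : (Equiv.Perm α → M) →+ M where
  toFun f := ∑ σ, (Equiv.Perm.sign σ : ℤ) • f σ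
  map_zero' := by simp
  map_add' f g := by simp [Finset.sum_add_distrib]

theorem signedSum_apply (f : Equiv.Perm α → M) :
    signedSum f = ∑ σ, (Equiv.Perm.sign σ : ℤ) • f σ :=
  rfl

theorem signedSum_mul_right (f : Equiv.Perm α → M) (τ : Equiv.Perm α) :
    signedSum (fun σ => f (σ * τ)) = (Equiv.Perm.sign τ : ℤ) • signedSum f := by
  rw [signedSum_apply, signedSum_apply, Finset.smul_sum]
  refine Fintype.sum_equiv (Equiv.mulRight τ) _ _ fun σ => ?_
  rw [Equiv.coe_mulRight, smul_smul, ← Units.val_mul, Equiv.Perm.sign_mul, mul_left_comm,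
    Int.units_mul_self, mul_one]

theorem signedSum_prod_map_map (A : α → R) (w : List α) (τ : Equiv.Perm α) :
    signedSum ((w.map τ).map fun i (σ : Equiv.Perm α) => A (σ i)).prod
      = (Equiv.Perm.sign τ : ℤ) • signedSum (w.map fun i (σ : Equiv.Perm α) => A (σ i)).prod := by
  rw [← signedSum_mul_right]
  congr 1
  ext σ
  simp [Pi.list_prod_apply, Function.comp_def]

theorem alternatesOn_signedSum (A : α → R) {w : List α} (hw : w.Nodup) :
    AlternatesOn signedSum (w.map fun i (σ : Equiv.Perm α) => A (σ i)) := by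
  intro u v X Y hperm
  obtain ⟨w', hmap, hw'⟩ := (congrFun₂ (List.eq_map_comp_perm _) _ _).mpr hperm
  obtain ⟨u', t, rfl, rfl, ht⟩ := List.map_eq_append_iff.mp hmap.symm
  obtain ⟨i, t, rfl, rfl, ht'⟩ := List.map_eq_cons_iff.mp ht
  obtain ⟨j, v', rfl, rfl, rfl⟩ := List.map_eq_cons_iff.mp ht'
  have hnodup : (u' ++ i :: j :: v').Nodup := hw'.nodup_iff.mpr hw
  have hij : i ≠ j := by
    rintro rfl
    simp [List.nodup_append] at hnodup
  have hswap := signedSum_prod_map_map A (u' ++ i :: j :: v') (Equiv.swap i j)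
  rw [map_swap_append_cons_cons hnodup, Equiv.Perm.sign_swap hij] at hswap
  simpa using congrArg (- ·) hswap.symm

theorem sum_sign_smul_nbr_nbr_cons (A : α → R) {b c : List α} (hbc : (b ++ c).Nodup)
    (hb : Odd b.length) :
    ∑ σ : Equiv.Perm α, (Equiv.Perm.sign σ : ℤ) •
        nbr (nbr (b.map fun i => A (σ i)) :: c.map fun i => A (σ i))
      = (c.length + 1).factorial • b.length.factorial •
          signedSum fun σ : Equiv.Perm α => ((b ++ c).map fun i => A (σ i)).prod := by
  have hsum := (List.map_append (f := fun i (σ : Equiv.Perm α) => A (σ i)) ▸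
    alternatesOn_signedSum A hbc).map_nbr_nbr_cons (by simpa using hb)
  have heval (σ : Equiv.Perm α) (l : List (Equiv.Perm α → R)) : nbr l σ = nbr (l.map (· σ)) :=
    map_nbr (Pi.evalRingHom (fun _ : Equiv.Perm α => R) σ) l
  simpa [signedSum_apply, heval, Pi.list_prod_apply, Function.comp_def] using hsum

end SignedSum

section Twop

theorem Twop_single (p : ℝ) (n k : ℤ × ℤ) (z : ℂ) :
    Twop p n (Finsupp.single k z) = Finsupp.single (k + n) ((p : ℂ) ^ wedge k n * z) := by
  simp [Twop]

theorem zpow_sum₀ {K ι : Type*} [CommGroupWithZero K] {a : K} (ha : a ≠ 0) (s : Finset ι)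
    (f : ι → ℤ) : a ^ ∑ i ∈ s, f i = ∏ i ∈ s, a ^ f i := by
  induction s using Finset.cons_induction with
  | empty => simp
  | cons i s hi ih => rw [Finset.sum_cons, Finset.prod_cons, zpow_add₀ ha, ih]

theorem prod_ofFn_Twop_single_zero {p : ℝ} (hp : p ≠ 0) {N : ℕ} (x : Fin N → ℤ) :
    (List.ofFn fun i => Twop p (x i, 1)).prod (Finsupp.single 0 1)
      = Finsupp.single (∑ i, x i, (N : ℤ))
          ((p : ℂ) ^ ∑ i : Fin N, (2 * (i : ℤ) - (N - 1)) * x i) := by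
  induction N with
  | zero => simp [← Prod.zero_eq_mk]
  | succ N ih =>
    have hexp : wedge (∑ i : Fin N, x i.succ, (N : ℤ)) (x 0, 1)
          + ∑ i : Fin N, (2 * (i : ℤ) - (N - 1)) * x i.succ
        = ∑ i : Fin (N + 1), (2 * (i : ℤ) - ((N + 1 : ℕ) - 1)) * x i := by
      have hshift : ∑ i : Fin N, (2 * (i : ℤ) - (N - 1)) * x i.succ + ∑ i : Fin N, x i.succ
          = ∑ i : Fin N, (2 * ((i : ℤ) + 1) - N) * x i.succ := by
        rw [← Finset.sum_add_distrib]
        exact Finset.sum_congr rfl fun i _ => by ring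
      simp only [wedge, Fin.sum_univ_succ, Fin.val_zero, Fin.val_succ]
      push_cast
      simp only [add_sub_cancel_right]
      linarith
    rw [List.ofFn_succ, List.prod_cons, Module.End.mul_apply, ih, Twop_single,
      ← zpow_add₀ (Complex.ofReal_ne_zero.mpr hp), hexp]
    congr 1
    ext <;> simp [Fin.sum_univ_succ, add_comm]

theorem signedSum_prod_ofFn_Twop_single_zero {p : ℝ} (hp : p ≠ 0) {N : ℕ} (x : Fin N → ℤ) :
    signedSum (fun σ : Equiv.Perm (Fin N) => (List.ofFn fun i => Twop p (x (σ i), 1)).prod)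
        (Finsupp.single 0 1)
      = Finsupp.single (∑ i, x i, (N : ℤ)) ((p : ℂ) ^ (-((N - 1) * ∑ i, x i) : ℤ) *
          (Matrix.vandermonde fun i => ((p : ℂ) ^ 2) ^ x i).det) := by
  have hp' : (p : ℂ) ≠ 0 := Complex.ofReal_ne_zero.mpr hp
  have hterm (σ : Equiv.Perm (Fin N)) :
      (List.ofFn fun i => Twop p (x (σ i), 1)).prod (Finsupp.single 0 1)
        = Finsupp.single (∑ i, x i, (N : ℤ)) ((p : ℂ) ^ (-((N - 1) * ∑ i, x i) : ℤ) *
            ∏ i, (((p : ℂ) ^ 2) ^ x (σ i)) ^ (i : ℕ)) := by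
    rw [prod_ofFn_Twop_single_zero hp fun i => x (σ i), Equiv.sum_comp σ x]
    have hexp : ∑ i : Fin N, (2 * (i : ℤ) - (N - 1)) * x (σ i)
        = -((N - 1) * ∑ i, x i) + ∑ i : Fin N, 2 * x (σ i) * i := by
      rw [← Equiv.sum_comp σ x, Finset.mul_sum, ← Finset.sum_neg_distrib, ← Finset.sum_add_distrib]
      exact Finset.sum_congr rfl fun i _ => by ring
    rw [hexp, zpow_add₀ hp', zpow_sum₀ hp']
    simp [zpow_mul]
  simp_rw [signedSum_apply, LinearMap.sum_apply, LinearMap.smul_apply, hterm]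
  generalize (p : ℂ) ^ (-((N - 1) * ∑ i, x i) : ℤ) = C
  rw [Matrix.det_apply, Finset.mul_sum, Finsupp.single_finsetSum]
  refine Finset.sum_congr rfl fun σ _ => ?_
  rw [Finsupp.smul_single, mul_smul_comm]
  rfl

theorem signedSum_prod_ofFn_Twop_ne_zero {p : ℝ} (hp₀ : p ≠ 0) (hp₁ : |p| ≠ 1) {N : ℕ}
    {x : Fin N → ℤ} (hx : Function.Injective x) :
    signedSum (fun σ : Equiv.Perm (Fin N) => (List.ofFn fun i => Twop p (x (σ i), 1)).prod)
      ≠ 0 := by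
  intro h
  have hnodes : Function.Injective fun i => ((p : ℂ) ^ 2) ^ x i := by
    intro i j hij
    have hreal : (p ^ 2) ^ x i = (p ^ 2) ^ x j := by
      beta_reduce at hij
      exact_mod_cast hij
    have hsq : p ^ 2 ≠ 1 := by simpa [abs_eq] using hp₁
    exact hx (zpow_right_injective₀ (by positivity) hsq hreal)
  have hp : (p : ℂ) ≠ 0 := Complex.ofReal_ne_zero.mpr hp₀
  have hcoeff := signedSum_prod_ofFn_Twop_single_zero hp₀ x
  rw [h, LinearMap.zero_apply, eq_comm, Finsupp.single_eq_zero] at hcoeff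
  exact mul_ne_zero (zpow_ne_zero _ hp) (Matrix.det_vandermonde_ne_zero_iff.mpr hnodes) hcoeff

end Twop

theorem stmt15_general (p : ℝ) (hp₀ : p ≠ 0) (hp₁ : |p| ≠ 1) (n : ℕ) (hodd : Odd n)
    (x : Fin (2 * n - 1) → ℤ) (hx : Function.Injective x) :
    ∑ σ : Equiv.Perm (Fin (2 * n - 1)), (Equiv.Perm.sign σ : ℤ) •
      nbr (nbr (List.ofFn fun j : Fin n =>
          Twop p (x (σ (Fin.castLE (by have := hodd.pos; omega) j)), 1)) ::
        List.ofFn fun j : Fin (n - 1) => Twop p (x (σ ⟨n + (j : ℕ), by omega⟩), 1)) ≠ 0 := by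
  set b := List.ofFn fun j : Fin n => (Fin.castLE (by omega) j : Fin (2 * n - 1))
  set c := List.ofFn fun j : Fin (n - 1) => (⟨n + (j : ℕ), by omega⟩ : Fin (2 * n - 1))
  have hsplit : b ++ c = List.ofFn id := by
    rw [List.ofFn_congr (show 2 * n - 1 = n + (n - 1) by omega), List.ofFn_add]
    rfl
  have hnodup : (b ++ c).Nodup := hsplit ▸ List.nodup_ofFn.mpr Function.injective_id
  have hsum := sum_sign_smul_nbr_nbr_cons (fun i => Twop p (x i, 1)) hnodup
    (by simpa [b] using hodd)
  have hne := signedSum_prod_ofFn_Twop_ne_zero hp₀ hp₁ hx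
  simp only [hsplit, b, c, List.map_ofFn, Function.comp_def, id] at hsum
  rw [hsum]
  exact smul_ne_zero (Nat.factorial_ne_zero _) (smul_ne_zero (Nat.factorial_ne_zero _) hne)

/-- for real `p > 1` and odd `n ≥ 3`, with indices `k_l = (l,1)`,
the fully antisymmetrized sh-Jacobi sum of the n-algebra of the operators `T` does
not vanish; hence for odd `n` this n-algebra is not a sh-n-Lie algebra. -/
theorem stmt15 (p : ℝ) (hp : 1 < p) (n : ℕ) (hn : 3 ≤ n) (hodd : Odd n) :
    ∑ σ : Equiv.Perm (Fin (2 * n - 1)), (Equiv.Perm.sign σ : ℤ) •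
      nbr ((nbr (List.ofFn fun j : Fin n =>
          Twop p ((((σ (Fin.castLE (by omega) j) : Fin (2 * n - 1)) : ℕ) + 1 : ℤ), 1))) ::
        (List.ofFn fun j : Fin (n - 1) =>
          Twop p ((((σ ⟨n + (j : ℕ), by have := j.isLt; omega⟩ : Fin (2 * n - 1)) : ℕ) + 1 :
            ℤ), 1))) ≠ 0 := by
  exact stmt15_general p (by positivity) (by rw [abs_of_pos (by positivity)]; exact hp.ne') n hodd
    (fun i => (i : ℕ) + 1) (fun i j h => by simpa [Fin.ext_iff] using h)
end
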